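/- arXiv:1511.05321 — 3 statements merged into one kernel-verified Lean document; each statement's English description precedes it below -/
import Mathlib

section
/- Let q₀ be a positive real number and μ ∈ ℂ with Re μ > 0, and assume θ₂(iν) ≠ 0, θ₃(iν) ≠ 0 and θ₄(iν) ≠ 0 for every ν with Re ν > 0. Then: w₁[q₀](i/μ) = −μ² w₃[1/q₀](iμ); w₁'[q₀](i/μ) = μ⁴ w₃'[1/q₀](iμ) + 2μ³ w₃[1/q₀](iμ); w₁''[q₀](i/μ) = −μ⁶ w₃''[1/q₀](iμ) − 6μ⁵ w₃'[1/q₀](iμ) − 6μ⁴ w₃[1/q₀](iμ); w₁⁽³⁾[q₀](i/μ) = μ⁸ w₃⁽³⁾[1/q₀](iμ) + 12μ⁷ w₃''[1/q₀](iμ) + 36μ⁶ w₃'[1/q₀](iμ) + 24μ⁵ w₃[1/q₀](iμ); w₁⁽⁴⁾[q₀](i/μ) = −μ¹⁰ w₃⁽⁴⁾[1/q₀](iμ) − 20μ⁹ w₃⁽³⁾[1/q₀](iμ) − 120μ⁸ w₃''[1/q₀](iμ) − 240μ⁷ w₃'[1/q₀](iμ) − 120μ⁶ w₃[1/q₀](iμ).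 -/
noncomputable section

/-- The theta function with characteristics `θ[p,q](iμ)`. -/
def theta (p q μ : ℂ) : ℂ :=
  ∑' m : ℤ, Complex.exp (-(Real.pi : ℂ) * ((m : ℂ) + p) ^ 2 * μ +
    2 * (Real.pi : ℂ) * Complex.I * ((m : ℂ) + p) * q)

/-- The characteristic derivative `∂qθ[p,q](iμ)`. -/
def thetaQ (p q μ : ℂ) : ℂ :=
  2 * (Real.pi : ℂ) * Complex.I *
    ∑' m : ℤ, ((m : ℂ) + p) * Complex.exp (-(Real.pi : ℂ) * ((m : ℂ) + p) ^ 2 * μ +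
      2 * (Real.pi : ℂ) * Complex.I * ((m : ℂ) + p) * q)

/-- The n-th μ-derivative `∂μⁿθ[p,q](iμ)`, given by its absolutely convergent series. -/
def thetaD (n : ℕ) (p q μ : ℂ) : ℂ :=
  (-(Real.pi : ℂ)) ^ n *
    ∑' m : ℤ, ((m : ℂ) + p) ^ (2 * n) *
      Complex.exp (-(Real.pi : ℂ) * ((m : ℂ) + p) ^ 2 * μ +
        2 * (Real.pi : ℂ) * Complex.I * ((m : ℂ) + p) * q)

/-- The n-th μ-derivative `∂μⁿ∂qθ[p,q](iμ)`, given by its absolutely convergent series. -/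
def thetaQD (n : ℕ) (p q μ : ℂ) : ℂ :=
  2 * Complex.I * (-1 : ℂ) ^ n * (Real.pi : ℂ) ^ (n + 1) *
    ∑' m : ℤ, ((m : ℂ) + p) ^ (2 * n + 1) *
      Complex.exp (-(Real.pi : ℂ) * ((m : ℂ) + p) ^ 2 * μ +
        2 * (Real.pi : ℂ) * Complex.I * ((m : ℂ) + p) * q)

/-- The constant `C(j|n) = (−i)ⁿ n! / (2ʲ (n−2j)! (2j)!!)` with `(2j)!! = 2ʲ j!`. -/
def Ccoef (j n : ℕ) : ℂ :=
  (-Complex.I) ^ n * (n.factorial : ℂ) /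
    ((2 : ℂ) ^ j * ((n - 2 * j).factorial : ℂ) * ((2 : ℂ) ^ j * (j.factorial : ℂ)))

/-- `w₁[p,q](iμ)` of the two-parametric family. -/
def w1 (p q μ : ℂ) : ℂ :=
  -(Complex.I / 2) * theta 0 0 μ * theta 0 (1 / 2) μ * thetaQ p (q + 1 / 2) μ /
    (Complex.exp ((Real.pi : ℂ) * Complex.I * p) * theta p q μ)

/-- `w₂[p,q](iμ)` of the two-parametric family. -/
def w2 (p q μ : ℂ) : ℂ :=
  (Complex.I / 2) * theta (1 / 2) 0 μ * theta 0 (1 / 2) μ *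
    thetaQ (p + 1 / 2) (q + 1 / 2) μ /
    (Complex.exp ((Real.pi : ℂ) * Complex.I * p) * theta p q μ)

/-- `w₃[p,q](iμ)` of the two-parametric family. -/
def w3 (p q μ : ℂ) : ℂ :=
  -(1 / 2 : ℂ) * theta (1 / 2) 0 μ * theta 0 0 μ * thetaQ (p + 1 / 2) q μ / theta p q μ

/-- The conformal factor `F[p,q](iμ)` of the two-parametric family. -/
def Ftwo (Λ p q μ : ℂ) : ℂ :=
  (2 / ((Real.pi : ℂ) * Λ)) * (theta p q μ / thetaQ p q μ) ^ 2

/-- `w₁[q₀](iμ)` of the one-parametric family. -/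
def v1 (q0 μ : ℂ) : ℂ := 1 / (μ + q0) + 2 * thetaD 1 (1 / 2) 0 μ / theta (1 / 2) 0 μ

/-- `w₂[q₀](iμ)` of the one-parametric family. -/
def v2 (q0 μ : ℂ) : ℂ := 1 / (μ + q0) + 2 * thetaD 1 0 0 μ / theta 0 0 μ

/-- `w₃[q₀](iμ)` of the one-parametric family. -/
def v3 (q0 μ : ℂ) : ℂ := 1 / (μ + q0) + 2 * thetaD 1 0 (1 / 2) μ / theta 0 (1 / 2) μ

/-- The conformal factor `F[q₀](iμ) = C(μ+q₀)²` of the one-parametric family. -/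
def Fone (C q0 μ : ℂ) : ℂ := C * (μ + q0) ^ 2

/-- The Seeley–de Witt coefficient `ã₀[p,q](iμ)` of the two-parametric family. -/
def a0two (Λ p q μ : ℂ) : ℂ :=
  4 * Ftwo Λ p q μ ^ 2 * w1 p q μ * w2 p q μ * w3 p q μ

/-- The Seeley–de Witt coefficient `ã₀[q₀](iμ)` of the one-parametric family. -/
def a0one (C q0 μ : ℂ) : ℂ :=
  4 * Fone C q0 μ ^ 2 * v1 q0 μ * v2 q0 μ * v3 q0 μ

/-- The Seeley–de Witt coefficient `ã₂[p,q](iμ)` of the two-parametric family. -/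
def a2two (Λ p q μ : ℂ) : ℂ :=
  -(Ftwo Λ p q μ / 3) * (w1 p q μ ^ 2 + w2 p q μ ^ 2 + w3 p q μ ^ 2) +
  (Ftwo Λ p q μ / 6) *
    ((w1 p q μ ^ 2 * w2 p q μ ^ 2 - deriv (w3 p q) μ ^ 2) / w3 p q μ ^ 2 +
     (w1 p q μ ^ 2 * w3 p q μ ^ 2 - deriv (w2 p q) μ ^ 2) / w2 p q μ ^ 2 +
     (w2 p q μ ^ 2 * w3 p q μ ^ 2 - deriv (w1 p q) μ ^ 2) / w1 p q μ ^ 2) -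
  (Ftwo Λ p q μ / 3) *
    (deriv (w1 p q) μ * deriv (w2 p q) μ / (w1 p q μ * w2 p q μ) +
     deriv (w1 p q) μ * deriv (w3 p q) μ / (w1 p q μ * w3 p q μ) +
     deriv (w2 p q) μ * deriv (w3 p q) μ / (w2 p q μ * w3 p q μ)) +
  (Ftwo Λ p q μ / 3) *
    (iteratedDeriv 2 (w1 p q) μ / w1 p q μ + iteratedDeriv 2 (w2 p q) μ / w2 p q μ +
     iteratedDeriv 2 (w3 p q) μ / w3 p q μ) -
  deriv (Ftwo Λ p q) μ ^ 2 / (2 * Ftwo Λ p q μ) + iteratedDeriv 2 (Ftwo Λ p q) μ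

/-!
Up to a constant factor, the inversion `μ ↦ 1/μ` takes `(μ + q₀) θ[p,q](iμ)²` to
`(μ + 1/q₀) θ[-q,p](iμ)²`: the square of the factor `√μ` in the functional equation of the theta
function cancels the denominator of `1/μ + q₀`. Hence the logarithmic derivatives, which are
`w₁[q₀]` for `(p,q) = (1/2,0)` and `w₃[1/q₀]` for `(p,q) = (0,1/2)`, are related by the weight `2`
law `w₁[q₀](i/μ) = -μ² w₃[1/q₀](iμ)`. Differentiating this `n` times amounts to iterating the
operator `-ν² d/dν`, and `(ν² d/dν)ⁿ = νⁿ⁺¹ (d/dν)ⁿ νⁿ⁻¹` reduces the result to the Leibniz rule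
for `νⁿ⁺¹ w₃[1/q₀](iν)`.
-/

open Filter Finset Topology Complex

section IteratedDeriv

variable {𝕜 : Type*} [NontriviallyNormedField 𝕜]

lemma iteratedDeriv_succ_id_mul {g : 𝕜 → 𝕜} {x : 𝕜} {n : ℕ} (hg : ContDiffAt 𝕜 (n + 1 : ℕ) g x) :
    iteratedDeriv (n + 1) (fun y ↦ y * g y) x =
      x * iteratedDeriv (n + 1) g x + (n + 1) * iteratedDeriv n g x := by
  have leibniz := iteratedDeriv_mul (contDiffAt_id (n := ((n + 1 : ℕ) : WithTop ℕ∞))) hg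
  rw [sum_range_succ', sum_range_succ'] at leibniz
  simpa [iteratedDeriv_id, add_comm, Pi.mul_def] using leibniz

lemma iteratedDeriv_pow_mul {g : 𝕜 → 𝕜} {x : 𝕜} {n : ℕ} (m : ℕ) (hg : ContDiffAt 𝕜 n g x) :
    iteratedDeriv n (fun y ↦ y ^ m * g y) x =
      ∑ i ∈ range (n + 1),
        n.choose i * (m.descFactorial i * x ^ (m - i)) * iteratedDeriv (n - i) g x := by
  have hpow : ContDiffAt 𝕜 n (fun y : 𝕜 ↦ y ^ m) x := contDiffAt_id.pow m
  simpa only [iteratedDeriv_pow] using! iteratedDeriv_mul hpow hg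

lemma hasDerivAt_iteratedDeriv {E : Type*} [NormedAddCommGroup E] [NormedSpace 𝕜 E] {g : 𝕜 → E}
    {x : 𝕜} {n : ℕ} (hg : ContDiffAt 𝕜 (n + 1 : ℕ) g x) :
    HasDerivAt (iteratedDeriv n g) (iteratedDeriv (n + 1) g x) x := by
  rw [iteratedDeriv_succ, hasDerivAt_deriv_iff, ← differentiableWithinAt_univ,
    ← iteratedDerivWithin_univ]
  exact hg.contDiffWithinAt.differentiableWithinAt_iteratedDerivWithin
    (by exact_mod_cast n.lt_succ_self) (by simp)

lemma deriv_inv_of_eventually_eq {f g : 𝕜 → 𝕜} {g' μ : 𝕜} (hμ : μ ≠ 0)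
    (hg : HasDerivAt g g' μ) (hfg : ∀ᶠ ν in 𝓝 μ, f ν⁻¹ = g ν) :
    deriv f μ⁻¹ = -μ ^ 2 * g' := by
  have tendsto_inv : Tendsto Inv.inv (𝓝 μ⁻¹) (𝓝 μ) := by
    simpa only [inv_inv] using tendsto_inv₀ (inv_ne_zero hμ)
  have hf : f =ᶠ[𝓝 μ⁻¹] g ∘ Inv.inv := by
    filter_upwards [tendsto_inv.eventually hfg] with y hy
    simpa only [Function.comp_apply, inv_inv] using hy
  have hcomp := HasDerivAt.comp_of_eq μ⁻¹ hg (hasDerivAt_inv (inv_ne_zero hμ)) (inv_inv μ).symm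
  rw [hf.deriv_eq, hcomp.deriv, inv_pow, inv_inv]
  ring

/-- Since `d(1/ν) = -ν⁻² dν`, the hypothesis says that `F(y) dy` pulls back to `G(ν) dν` under
`y = 1/ν`. The conclusion is the operator identity `(ν² d/dν)ⁿ = νⁿ⁺¹ (d/dν)ⁿ νⁿ⁻¹`. -/
lemma iteratedDeriv_inv_of_eventually_eq_neg_sq_mul {F G : 𝕜 → 𝕜} {n : ℕ} {μ : 𝕜} (hμ : μ ≠ 0)
    (hG : ContDiffAt 𝕜 n G μ) (hFG : ∀ᶠ ν in 𝓝 μ, F ν⁻¹ = -ν ^ 2 * G ν) :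
    iteratedDeriv n F μ⁻¹ =
      (-1) ^ (n + 1) * μ ^ (n + 1) * iteratedDeriv n (fun ν ↦ ν ^ (n + 1) * G ν) μ := by
  induction n generalizing μ with
  | zero =>
    simp only [iteratedDeriv_zero, hFG.self_of_nhds]
    ring
  | succ n ih =>
    set H : 𝕜 → 𝕜 := fun ν ↦ ν ^ (n + 1) * G ν
    have hH : ContDiffAt 𝕜 (n + 1 : ℕ) H μ := (contDiffAt_id.pow _).mul hG
    have ih_near : ∀ᶠ ν in 𝓝 μ,
        iteratedDeriv n F ν⁻¹ = (-1) ^ (n + 1) * ν ^ (n + 1) * iteratedDeriv n H ν := by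
      filter_upwards [eventually_ne_nhds hμ, hFG.eventually_nhds,
        hG.eventually (by simp)] with ν hν hFGν hGν
      exact ih hν (hGν.of_le (by exact_mod_cast n.le_succ)) hFGν
    have hasDerivAt_rhs : HasDerivAt
        (fun ν ↦ (-1) ^ (n + 1) * ν ^ (n + 1) * iteratedDeriv n H ν)
        ((-1) ^ (n + 1) * ((n + 1 : ℕ) * μ ^ n) * iteratedDeriv n H μ +
          (-1) ^ (n + 1) * μ ^ (n + 1) * iteratedDeriv (n + 1) H μ) μ :=
      ((hasDerivAt_pow (n + 1) μ).const_mul _).mul (hasDerivAt_iteratedDeriv hH)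
    have hH_succ : (fun ν ↦ ν ^ (n + 1 + 1) * G ν) = fun ν ↦ ν * H ν := by
      funext ν
      simp only [H]
      ring
    rw [iteratedDeriv_succ, deriv_inv_of_eventually_eq hμ hasDerivAt_rhs ih_near, hH_succ,
      iteratedDeriv_succ_id_mul hH]
    push_cast
    ring

end IteratedDeriv

section Theta

lemma jacobiTheta₂_term_fderiv_apply (m : ℤ) (z τ u v : ℂ) :
    jacobiTheta₂_term_fderiv m z τ (u, v) =
      (2 * Real.pi * I * m * u + Real.pi * I * m ^ 2 * v) * jacobiTheta₂_term m z τ :=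
  mul_comm _ _

lemma theta_term_eq_exp_mul_jacobiTheta₂_term (p q μ : ℂ) (m : ℤ) :
    exp (-Real.pi * (m + p) ^ 2 * μ + 2 * Real.pi * I * (m + p) * q) =
      exp (-Real.pi * p ^ 2 * μ + 2 * Real.pi * I * p * q) *
        jacobiTheta₂_term m (q + I * p * μ) (I * μ) := by
  rw [jacobiTheta₂_term, ← exp_add]
  congr 1
  linear_combination (-Real.pi * m ^ 2 * μ - 2 * Real.pi * m * p * μ) * I_sq

lemma theta_eq_exp_mul_jacobiTheta₂ (p q μ : ℂ) :
    theta p q μ =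
      exp (-Real.pi * p ^ 2 * μ + 2 * Real.pi * I * p * q) *
        jacobiTheta₂ (q + I * p * μ) (I * μ) := by
  rw [theta, jacobiTheta₂, ← tsum_mul_left]
  exact tsum_congr (theta_term_eq_exp_mul_jacobiTheta₂_term p q μ)

lemma hasDerivAt_theta (p q : ℂ) {μ : ℂ} (hμ : 0 < μ.re) :
    HasDerivAt (theta p q) (thetaD 1 p q μ) μ := by
  have hτ : 0 < (I * μ).im := by simpa
  set z := q + I * p * μ
  set c : ℂ := -Real.pi * p ^ 2
  set E := exp (c * μ + 2 * Real.pi * I * p * q)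
  have hE : HasDerivAt (fun ν ↦ exp (c * ν + 2 * Real.pi * I * p * q)) (E * c) μ := by
    simpa using (((hasDerivAt_id μ).const_mul c).add_const (2 * Real.pi * I * p * q)).cexp
  have hpath : HasDerivAt (fun ν ↦ (q + I * p * ν, I * ν)) (I * p, I) μ := by
    simpa using (((hasDerivAt_id μ).const_mul (I * p)).const_add q).prodMk
      ((hasDerivAt_id μ).const_mul I)
  have hJ : HasDerivAt (fun ν ↦ jacobiTheta₂ (q + I * p * ν) (I * ν))
      (jacobiTheta₂_fderiv z (I * μ) (I * p, I)) μ :=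
    (hasFDerivAt_jacobiTheta₂ z hτ).comp_hasDerivAt_of_eq μ hpath rfl
  have hseries := ((hasSum_jacobiTheta₂_term z hτ).mul_left (E * c)).add
    (((ContinuousLinearMap.apply ℂ ℂ (I * p, I)).hasSum
      (hasSum_jacobiTheta₂_term_fderiv z hτ)).mul_left E)
  have hD : thetaD 1 p q μ =
      E * c * jacobiTheta₂ z (I * μ) + E * jacobiTheta₂_fderiv z (I * μ) (I * p, I) := by
    rw [thetaD, ← tsum_mul_left]
    refine Eq.trans (tsum_congr fun m ↦ ?_) hseries.tsum_eq
    rw [theta_term_eq_exp_mul_jacobiTheta₂_term, ContinuousLinearMap.apply_apply,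
      jacobiTheta₂_term_fderiv_apply]
    linear_combination
      -(2 * Real.pi * m * p + Real.pi * m ^ 2) * E * jacobiTheta₂_term m z (I * μ) * I_sq
  rw [hD, funext (theta_eq_exp_mul_jacobiTheta₂ p q)]
  exact hE.mul hJ

lemma analyticAt_theta (p q : ℂ) {μ : ℂ} (hμ : 0 < μ.re) : AnalyticAt ℂ (theta p q) μ :=
  DifferentiableOn.analyticAt (s := {ν | 0 < ν.re})
    (fun _ hν ↦ (hasDerivAt_theta p q hν).differentiableAt.differentiableWithinAt)
    ((isOpen_re_gt 0).mem_nhds hμ)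

lemma theta_inv (p q : ℂ) {μ : ℂ} (hμ : μ ≠ 0) :
    theta p q μ⁻¹ = exp (2 * Real.pi * I * p * q) * μ ^ (1 / 2 : ℂ) * theta (-q) p μ := by
  have sqrt_ne_zero : μ ^ (1 / 2 : ℂ) ≠ 0 := by simp [cpow_eq_zero_iff, hμ]
  have hτ : -I * (I * μ) = μ := by linear_combination -μ * I_sq
  have hτ' : -1 / (I * μ) = I * μ⁻¹ := by
    field_simp
    exact I_sq.symm
  have hz' : (p + I * -q * μ) / (I * μ) = -(q + I * p * μ⁻¹) := by
    field_simp
    linear_combination p * I_sq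
  rw [theta_eq_exp_mul_jacobiTheta₂ (-q) p μ, jacobiTheta₂_functional_equation, hτ, hτ', hz',
    jacobiTheta₂_neg_left, theta_eq_exp_mul_jacobiTheta₂ p q μ⁻¹]
  have hexp : exp (-Real.pi * p ^ 2 * μ⁻¹ + 2 * Real.pi * I * p * q) =
      exp (2 * Real.pi * I * p * q) * exp (-Real.pi * (-q) ^ 2 * μ + 2 * Real.pi * I * -q * p) *
        exp (-Real.pi * I * (p + I * -q * μ) ^ 2 / (I * μ)) := by
    rw [← exp_add, ← exp_add]
    congr 1
    field_simp
    linear_combination μ ^ 2 * q ^ 2 * I_sq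
  rw [hexp]
  field_simp

/-- The function whose logarithmic derivative in `μ` is the coefficient
`1/(μ + q₀) + 2 ∂μθ[p,q](iμ)/θ[p,q](iμ)` of the one-parametric family; the theta function enters
squared, so that no square root of `μ` is left under `μ ↦ 1/μ`. -/
def thetaPotential (q0 p q μ : ℂ) : ℂ := (μ + q0) * theta p q μ ^ 2

lemma analyticAt_thetaPotential (q0 p q : ℂ) {μ : ℂ} (hμ : 0 < μ.re) :
    AnalyticAt ℂ (thetaPotential q0 p q) μ :=
  (analyticAt_id.add analyticAt_const).mul ((analyticAt_theta p q hμ).pow 2)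

lemma logDeriv_thetaPotential {q0 p q μ : ℂ} (hμ : 0 < μ.re) (hpole : μ + q0 ≠ 0)
    (hθ : theta p q μ ≠ 0) :
    logDeriv (thetaPotential q0 p q) μ =
      1 / (μ + q0) + 2 * thetaD 1 p q μ / theta p q μ := by
  have hderiv : HasDerivAt (thetaPotential q0 p q) _ μ :=
    ((hasDerivAt_id' μ).add_const q0).mul ((hasDerivAt_theta p q hμ).pow 2)
  rw [logDeriv_apply, hderiv.deriv, thetaPotential]
  simp only [Nat.cast_ofNat, Nat.add_one_sub_one, pow_one, one_mul]
  field_simp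

lemma thetaPotential_inv {q0 μ : ℂ} (p q : ℂ) (hq0 : q0 ≠ 0) (hμ : μ ≠ 0) :
    thetaPotential q0 p q μ⁻¹ =
      exp (2 * Real.pi * I * p * q) ^ 2 * q0 * thetaPotential q0⁻¹ (-q) p μ := by
  have sqrt_sq : (μ ^ (1 / 2 : ℂ)) ^ 2 = μ := by simp
  rw [thetaPotential, thetaPotential, theta_inv p q hμ, mul_pow, mul_pow, sqrt_sq]
  field_simp
  ring

lemma inv_re_pos {μ : ℂ} (hμ : 0 < μ.re) : 0 < μ⁻¹.re := by
  rw [inv_re]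
  exact div_pos hμ (normSq_pos.2 (ne_zero_of_re_pos hμ))

lemma logDeriv_thetaPotential_inv {q0 μ : ℂ} (p q : ℂ) (hq0 : q0 ≠ 0) (hμ : 0 < μ.re) :
    logDeriv (thetaPotential q0 p q) μ⁻¹ =
      -μ ^ 2 * logDeriv (thetaPotential q0⁻¹ (-q) p) μ := by
  have hμ0 : μ ≠ 0 := ne_zero_of_re_pos hμ
  have hcomp : logDeriv (thetaPotential q0 p q ∘ Inv.inv) μ =
      logDeriv (thetaPotential q0 p q) μ⁻¹ * deriv Inv.inv μ :=
    logDeriv_comp (analyticAt_thetaPotential q0 p q (inv_re_pos hμ)).differentiableAt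
      (differentiableAt_inv hμ0)
  have hinv : thetaPotential q0 p q ∘ Inv.inv =ᶠ[𝓝 μ] fun ν ↦
      exp (2 * Real.pi * I * p * q) ^ 2 * q0 * thetaPotential q0⁻¹ (-q) p ν := by
    filter_upwards [eventually_ne_nhds hμ0] with ν hν using thetaPotential_inv p q hq0 hν
  have hconst : exp (2 * Real.pi * I * p * q) ^ 2 * q0 ≠ 0 :=
    mul_ne_zero (pow_ne_zero 2 (exp_ne_zero _)) hq0
  rw [(logDeriv_congr_nhds hinv).self_of_nhds, logDeriv_const_mul _ _ hconst] at hcomp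
  rw [hcomp, deriv_inv]
  field_simp

lemma eventually_re_pos_and_add_ne_zero_and_theta_ne_zero {q0 p q μ : ℂ} (hμ : 0 < μ.re)
    (hpole : μ + q0 ≠ 0) (hθ : theta p q μ ≠ 0) :
    ∀ᶠ ν in 𝓝 μ, 0 < ν.re ∧ ν + q0 ≠ 0 ∧ theta p q ν ≠ 0 :=
  ((isOpen_re_gt 0).eventually_mem hμ).and <|
    ((continuous_add_const q0).continuousAt.eventually_ne hpole).and <|
      (analyticAt_theta p q hμ).continuousAt.eventually_ne hθ

lemma analyticAt_v3 {q0 μ : ℂ} (hμ : 0 < μ.re) (hpole : μ + q0 ≠ 0)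
    (hθ : theta 0 (1 / 2) μ ≠ 0) : AnalyticAt ℂ (v3 q0) μ := by
  have hP := analyticAt_thetaPotential q0 0 (1 / 2) hμ
  refine (hP.deriv.div hP (mul_ne_zero hpole (pow_ne_zero 2 hθ))).congr ?_
  filter_upwards [eventually_re_pos_and_add_ne_zero_and_theta_ne_zero hμ hpole hθ]
    with ν ⟨hν, hν_pole, hν_θ⟩
  exact logDeriv_thetaPotential hν hν_pole hν_θ

lemma v1_inv {q0 μ : ℂ} (hq0 : q0 ≠ 0) (hμ : 0 < μ.re) (hpole : μ + q0⁻¹ ≠ 0)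
    (hθ : theta 0 (1 / 2) μ ≠ 0) : v1 q0 μ⁻¹ = -μ ^ 2 * v3 q0⁻¹ μ := by
  have hμ0 : μ ≠ 0 := ne_zero_of_re_pos hμ
  have hpole_inv : μ⁻¹ + q0 ≠ 0 := by
    contrapose! hpole
    rw [eq_neg_of_add_eq_zero_right hpole, inv_neg, inv_inv, add_neg_cancel]
  have hθ_inv : theta (1 / 2) 0 μ⁻¹ ≠ 0 := by
    simpa [theta_inv _ _ hμ0, hμ0, cpow_eq_zero_iff] using hθ
  calc v1 q0 μ⁻¹ = logDeriv (thetaPotential q0 (1 / 2) 0) μ⁻¹ :=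
        (logDeriv_thetaPotential (inv_re_pos hμ) hpole_inv hθ_inv).symm
    _ = -μ ^ 2 * logDeriv (thetaPotential q0⁻¹ 0 (1 / 2)) μ := by
        rw [logDeriv_thetaPotential_inv _ _ hq0 hμ, neg_zero]
    _ = -μ ^ 2 * v3 q0⁻¹ μ := by rw [logDeriv_thetaPotential hμ hpole hθ, v3]

end Theta

theorem statement12_general {q0 μ : ℂ} (hq0 : q0 ≠ 0) (hμ : 0 < μ.re) (hpole : μ + q0⁻¹ ≠ 0)
    (hθ : theta 0 (1 / 2) μ ≠ 0) (n : ℕ) :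
    iteratedDeriv n (v1 q0) μ⁻¹ =
      (-1) ^ (n + 1) * μ ^ (n + 1) *
        ∑ i ∈ range (n + 1), n.choose i * ((n + 1).descFactorial i * μ ^ (n + 1 - i)) *
          iteratedDeriv (n - i) (v3 q0⁻¹) μ := by
  have hv3 : ContDiffAt ℂ n (v3 q0⁻¹) μ := (analyticAt_v3 hμ hpole hθ).contDiffAt
  have hv1 : ∀ᶠ ν in 𝓝 μ, v1 q0 ν⁻¹ = -ν ^ 2 * v3 q0⁻¹ ν := by
    filter_upwards [eventually_re_pos_and_add_ne_zero_and_theta_ne_zero hμ hpole hθ]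
      with ν ⟨hν, hν_pole, hν_θ⟩
    exact v1_inv hq0 hν hν_pole hν_θ
  rw [iteratedDeriv_inv_of_eventually_eq_neg_sq_mul (ne_zero_of_re_pos hμ) hv3 hv1,
    iteratedDeriv_pow_mul _ hv3]

/-- Lemma 6.2: behavior of `w₁[q₀]` and its μ-derivatives up to order 4 under
`iμ ↦ i/μ`, expressed through `w₃[1/q₀]`. -/
theorem statement12 (q0 : ℝ) (hq0 : 0 < q0) (μ : ℂ) (hμ : 0 < μ.re)
    (h2 : ∀ ν : ℂ, 0 < ν.re → theta (1 / 2) 0 ν ≠ 0)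
    (h3 : ∀ ν : ℂ, 0 < ν.re → theta 0 0 ν ≠ 0)
    (h4 : ∀ ν : ℂ, 0 < ν.re → theta 0 (1 / 2) ν ≠ 0) :
    v1 (q0 : ℂ) (1 / μ) = -μ ^ 2 * v3 (1 / (q0 : ℂ)) μ ∧
    iteratedDeriv 1 (v1 (q0 : ℂ)) (1 / μ) =
        μ ^ 4 * iteratedDeriv 1 (v3 (1 / (q0 : ℂ))) μ + 2 * μ ^ 3 * v3 (1 / (q0 : ℂ)) μ ∧
    iteratedDeriv 2 (v1 (q0 : ℂ)) (1 / μ) =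
        -μ ^ 6 * iteratedDeriv 2 (v3 (1 / (q0 : ℂ))) μ -
          6 * μ ^ 5 * iteratedDeriv 1 (v3 (1 / (q0 : ℂ))) μ - 6 * μ ^ 4 * v3 (1 / (q0 : ℂ)) μ ∧
    iteratedDeriv 3 (v1 (q0 : ℂ)) (1 / μ) =
        μ ^ 8 * iteratedDeriv 3 (v3 (1 / (q0 : ℂ))) μ +
          12 * μ ^ 7 * iteratedDeriv 2 (v3 (1 / (q0 : ℂ))) μ +
          36 * μ ^ 6 * iteratedDeriv 1 (v3 (1 / (q0 : ℂ))) μ + 24 * μ ^ 5 * v3 (1 / (q0 : ℂ)) μ ∧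
    iteratedDeriv 4 (v1 (q0 : ℂ)) (1 / μ) =
        -μ ^ 10 * iteratedDeriv 4 (v3 (1 / (q0 : ℂ))) μ -
          20 * μ ^ 9 * iteratedDeriv 3 (v3 (1 / (q0 : ℂ))) μ -
          120 * μ ^ 8 * iteratedDeriv 2 (v3 (1 / (q0 : ℂ))) μ -
          240 * μ ^ 7 * iteratedDeriv 1 (v3 (1 / (q0 : ℂ))) μ -
          120 * μ ^ 6 * v3 (1 / (q0 : ℂ)) μ := by
  have hpole : μ + (q0 : ℂ)⁻¹ ≠ 0 := ne_zero_of_re_pos <| by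
    rw [← ofReal_inv, add_re, ofReal_re]
    positivity
  have h := statement12_general (ofReal_ne_zero.2 hq0.ne') hμ hpole (h4 μ hμ)
  simp only [one_div]
  refine ⟨v1_inv (ofReal_ne_zero.2 hq0.ne') hμ hpole (h4 μ hμ),
    (h 1).trans ?_, (h 2).trans ?_, (h 3).trans ?_, (h 4).trans ?_⟩
  all_goals
    simp only [sum_range_succ, sum_range_zero, Nat.choose, Nat.descFactorial, Nat.reduceAdd,
      Nat.reduceSub, iteratedDeriv_zero]
    push_cast
    ring

end
end

section
/- Let p, q ∈ ℂ and μ ∈ ℂ with Re μ > 0. Then ã₀[p,q](iμ+1) = ã₀[p,q+p+1/2](iμ). Moreover, if θ[−q,p](iμ) ≠ 0 and ∂qθ[−q,p](iμ) ≠ 0, then ã₀[p,q](i/μ) = −μ² ã₀[−q,p](iμ). -/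
noncomputable section

/-!
Adding `1` to `iμ` multiplies the `m`-th summand of `θ[p,q]` by `exp(πi(m+p)²)`, which amounts to
a constant factor and a shift of `q`; replacing `iμ` by `i/μ` is Poisson summation, i.e. the
functional equation of the Jacobi theta function. Under either substitution `θ[p,q]` and
`∂qθ[p,q]` acquire the same exponential factor `e`, up to a power of `μ`. In `ã₀` the `θ[p,q]` of
`F²` cancel those of `w₁w₂w₃` up to a single one, so `ã₀` is a constant multiple of
`(θ₂θ₃θ₄)² e^{-2πip} θ[p,q] / (∂qθ[p,q])⁴` times the three derivatives `∂qθ` at the half-period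
translates of `[p,q]`. The latter contribute `e³`, up to a factor turning `e^{-2πip}` into its
counterpart at the new characteristics, so all powers of `e` cancel, leaving the roots of unity
and powers of `μ`.
-/

section

open Complex Real

/-- The Gaussian wave `x ↦ exp(−πx²μ + 2πixq)`. Its values at the points of `ℤ + p` are the
summands of `θ[p,q](iμ)`. -/
def gaussianWave (x q μ : ℂ) : ℂ :=
  cexp (-(π : ℂ) * x ^ 2 * μ + 2 * (π : ℂ) * I * x * q)

lemma theta_eq_tsum_gaussianWave (p q μ : ℂ) :
    theta p q μ = ∑' m : ℤ, gaussianWave (m + p) q μ :=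
  rfl

lemma thetaQ_eq_tsum_gaussianWave (p q μ : ℂ) :
    thetaQ p q μ = 2 * π * I * ∑' m : ℤ, (m + p) * gaussianWave (m + p) q μ :=
  rfl

lemma tsum_int_cast_add_one (f : ℂ → ℂ) (p : ℂ) :
    ∑' m : ℤ, f (m + (p + 1)) = ∑' m : ℤ, f (m + p) := by
  rw [← (Equiv.addRight (1 : ℤ)).tsum_eq (fun m : ℤ => f (m + p))]
  simp only [Equiv.coe_addRight, Int.cast_add, Int.cast_one, add_assoc, add_comm p]

lemma theta_p_add_one (p q μ : ℂ) : theta (p + 1) q μ = theta p q μ :=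
  tsum_int_cast_add_one (fun x => gaussianWave x q μ) p

lemma thetaQ_p_add_one (p q μ : ℂ) : thetaQ (p + 1) q μ = thetaQ p q μ :=
  congrArg (2 * π * I * ·) (tsum_int_cast_add_one (fun x => x * gaussianWave x q μ) p)

lemma gaussianWave_q_add_one (p q μ : ℂ) (m : ℤ) :
    gaussianWave (m + p) (q + 1) μ = cexp (2 * π * I * p) * gaussianWave (m + p) q μ := by
  rw [gaussianWave, gaussianWave, ← Complex.exp_add, Complex.exp_eq_exp_iff_exists_int]
  exact ⟨m, by ring⟩

lemma theta_q_add_one (p q μ : ℂ) :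
    theta p (q + 1) μ = cexp (2 * π * I * p) * theta p q μ := by
  simp only [theta_eq_tsum_gaussianWave, gaussianWave_q_add_one, tsum_mul_left]

lemma thetaQ_q_add_one (p q μ : ℂ) :
    thetaQ p (q + 1) μ = cexp (2 * π * I * p) * thetaQ p q μ := by
  simp only [thetaQ_eq_tsum_gaussianWave, gaussianWave_q_add_one,
    mul_left_comm _ (cexp (2 * π * I * p)), tsum_mul_left]

lemma gaussianWave_sub_I (p q μ : ℂ) (m : ℤ) :
    gaussianWave (m + p) q (μ - I) =
      cexp (-π * I * (p * (p + 1))) * gaussianWave (m + p) (q + p + 1 / 2) μ := by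
  rw [gaussianWave, gaussianWave, ← Complex.exp_add, Complex.exp_eq_exp_iff_exists_int]
  -- `exp(πi(m+p)²)` is the exponential of a linear function of `m` because `m² ≡ m` modulo 2.
  obtain ⟨k, hk⟩ := Int.even_mul_pred_self m
  have hk' : (m : ℂ) * (m - 1) = k + k := mod_cast hk
  exact ⟨k, by linear_combination (π * I) * hk'⟩

lemma theta_sub_I (p q μ : ℂ) :
    theta p q (μ - I) = cexp (-π * I * (p * (p + 1))) * theta p (q + p + 1 / 2) μ := by
  simp only [theta_eq_tsum_gaussianWave, gaussianWave_sub_I, tsum_mul_left]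

lemma thetaQ_sub_I (p q μ : ℂ) :
    thetaQ p q (μ - I) = cexp (-π * I * (p * (p + 1))) * thetaQ p (q + p + 1 / 2) μ := by
  simp only [thetaQ_eq_tsum_gaussianWave, gaussianWave_sub_I,
    mul_left_comm _ (cexp (-π * I * (p * (p + 1)))), tsum_mul_left]

lemma gaussianWave_eq_mul_jacobiTheta₂_term (p q μ : ℂ) (m : ℤ) :
    gaussianWave (m + p) q μ =
      gaussianWave p q μ * jacobiTheta₂_term m (q + I * p * μ) (I * μ) := by
  rw [gaussianWave, gaussianWave, jacobiTheta₂_term, ← Complex.exp_add]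
  congr 1
  linear_combination (-(2 * (π : ℂ) * m * p * μ + π * m ^ 2 * μ)) * I_sq

lemma theta_eq_mul_jacobiTheta₂ (p q μ : ℂ) :
    theta p q μ = gaussianWave p q μ * jacobiTheta₂ (q + I * p * μ) (I * μ) := by
  simp only [theta_eq_tsum_gaussianWave, gaussianWave_eq_mul_jacobiTheta₂_term, tsum_mul_left,
    jacobiTheta₂]

lemma thetaQ_eq_mul_jacobiTheta₂' {μ : ℂ} (hμ : 0 < μ.re) (p q : ℂ) :
    thetaQ p q μ = gaussianWave p q μ * (jacobiTheta₂' (q + I * p * μ) (I * μ) +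
      2 * π * I * p * jacobiTheta₂ (q + I * p * μ) (I * μ)) := by
  have hτ : 0 < (I * μ).im := by simpa using hμ
  have hsum := ((hasSum_jacobiTheta₂'_term (q + I * p * μ) hτ).add
    ((hasSum_jacobiTheta₂_term (q + I * p * μ) hτ).mul_left (2 * π * I * p))).mul_left
    (gaussianWave p q μ)
  rw [← hsum.tsum_eq, thetaQ_eq_tsum_gaussianWave, ← tsum_mul_left]
  refine tsum_congr fun m => ?_
  rw [gaussianWave_eq_mul_jacobiTheta₂_term, jacobiTheta₂'_term]
  ring

lemma gaussianWave_one_div {μ : ℂ} (hμ : μ ≠ 0) (p q : ℂ) :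
    gaussianWave p q (1 / μ) = cexp (2 * π * I * p * q) * gaussianWave (-q) p μ *
      cexp (-π * (p + I * -q * μ) ^ 2 / μ) := by
  rw [gaussianWave, gaussianWave, ← Complex.exp_add, ← Complex.exp_add]
  congr 1
  field_simp
  linear_combination (q ^ 2 * μ ^ 2) * I_sq

lemma neg_I_mul_I_mul (μ : ℂ) : -I * (I * μ) = μ := by
  rw [← mul_assoc, neg_mul, I_mul_I, neg_neg, one_mul]

lemma div_I_mul (z μ : ℂ) : z / (I * μ) = -(I * z / μ) := by
  rw [div_mul_eq_div_div, div_I]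
  ring

lemma neg_one_div_I_mul (μ : ℂ) : -1 / (I * μ) = I * (1 / μ) := by
  rw [div_I_mul]
  ring

lemma jacobiTheta₂_I_mul (z μ : ℂ) :
    jacobiTheta₂ z (I * μ) =
      1 / μ ^ (1 / 2 : ℂ) * cexp (-π * z ^ 2 / μ) * jacobiTheta₂ (I * z / μ) (I * (1 / μ)) := by
  have hexp : -π * I * z ^ 2 / (I * μ) = -π * z ^ 2 / μ := by field_simp
  rw [jacobiTheta₂_functional_equation, neg_I_mul_I_mul, hexp, neg_one_div_I_mul, div_I_mul,
    jacobiTheta₂_neg_left]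

lemma jacobiTheta₂'_I_mul (z μ : ℂ) :
    jacobiTheta₂' z (I * μ) =
      I / μ * (1 / μ ^ (1 / 2 : ℂ)) * cexp (-π * z ^ 2 / μ) *
        (jacobiTheta₂' (I * z / μ) (I * (1 / μ)) +
          2 * π * I * z * jacobiTheta₂ (I * z / μ) (I * (1 / μ))) := by
  have hexp : -π * I * z ^ 2 / (I * μ) = -π * z ^ 2 / μ := by field_simp
  rw [jacobiTheta₂'_functional_equation, neg_I_mul_I_mul, hexp, neg_one_div_I_mul, div_I_mul,
    div_I_mul, jacobiTheta₂_neg_left, jacobiTheta₂'_neg_left]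
  ring

lemma I_mul_add_div {μ : ℂ} (hμ : μ ≠ 0) (p q : ℂ) :
    I * (p + I * -q * μ) / μ = q + I * p * (1 / μ) := by
  field_simp
  linear_combination (-(q * μ)) * I_sq

lemma theta_one_div {μ : ℂ} (hμ : μ ≠ 0) (p q : ℂ) :
    theta p q (1 / μ) = μ ^ (1 / 2 : ℂ) * cexp (2 * π * I * p * q) * theta (-q) p μ := by
  have hsqrt : μ ^ (1 / 2 : ℂ) ≠ 0 := by simp [cpow_eq_zero_iff, hμ]
  rw [theta_eq_mul_jacobiTheta₂, theta_eq_mul_jacobiTheta₂,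
    jacobiTheta₂_I_mul (p + I * -q * μ), I_mul_add_div hμ, gaussianWave_one_div hμ]
  field_simp

lemma thetaQ_one_div {μ : ℂ} (hμ : 0 < μ.re) (p q : ℂ) :
    thetaQ p q (1 / μ) =
      -I * μ * μ ^ (1 / 2 : ℂ) * cexp (2 * π * I * p * q) * thetaQ (-q) p μ := by
  have hμ₀ : μ ≠ 0 := ne_zero_of_re_pos hμ
  have hsqrt : μ ^ (1 / 2 : ℂ) ≠ 0 := by simp [cpow_eq_zero_iff, hμ₀]
  have hμ' : 0 < (1 / μ).re := by
    rw [one_div, inv_re]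
    exact div_pos hμ (normSq_pos.mpr hμ₀)
  rw [thetaQ_eq_mul_jacobiTheta₂' hμ', thetaQ_eq_mul_jacobiTheta₂' hμ,
    jacobiTheta₂'_I_mul (p + I * -q * μ), jacobiTheta₂_I_mul (p + I * -q * μ), I_mul_add_div hμ₀,
    gaussianWave_one_div hμ₀]
  generalize jacobiTheta₂ _ _ = J, jacobiTheta₂' _ _ = J'
  field_simp
  linear_combination gaussianWave (-q) p μ * (J' + 2 * π * I * p * J - 2 * π * I ^ 2 * q * μ * J) *
    I_sq

/-- The product `θ₂θ₃θ₄` of the even theta constants; it is twice the cube of the Dedekind eta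
function. -/
def thetaConstProd (μ : ℂ) : ℂ :=
  theta (1 / 2) 0 μ * theta 0 0 μ * theta 0 (1 / 2) μ

/-- The product of the derivatives `∂qθ` at the three translates of `[p,q]` by half-periods,
i.e. the part of the numerator of `w₁w₂w₃` that depends on `[p,q]`. -/
def thetaQProd (p q μ : ℂ) : ℂ :=
  thetaQ p (q + 1 / 2) μ * thetaQ (p + 1 / 2) (q + 1 / 2) μ * thetaQ (p + 1 / 2) q μ

lemma a0two_eq_thetaConstProd_sq_mul_thetaQProd (Λ p q μ : ℂ) :
    a0two Λ p q μ = -2 / (π ^ 2 * Λ ^ 2) * thetaConstProd μ ^ 2 * thetaQProd p q μ *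
      cexp (-(2 * π * I * p)) * theta p q μ / thetaQ p q μ ^ 4 := by
  have hexp : cexp (-(2 * π * I * p)) = (cexp (π * I * p) ^ 2)⁻¹ := by
    rw [← Complex.exp_nat_mul, ← Complex.exp_neg]
    congr 1
    push_cast
    ring
  rw [hexp, a0two, Ftwo, w1, w2, w3, thetaConstProd, thetaQProd]
  field_simp
  rw [I_sq]
  ring

lemma exp_pi_div_four_mul_I_sq : cexp (π / 4 * I) ^ 2 = I := by
  rw [← Complex.exp_nat_mul]
  convert Complex.exp_pi_div_two_mul_I using 2
  push_cast
  ring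

lemma thetaConstProd_sub_I (μ : ℂ) :
    thetaConstProd (μ - I) = cexp (π / 4 * I) * thetaConstProd μ := by
  have hθ₂ : theta (1 / 2) 0 (μ - I) = cexp (π / 4 * I) * theta (1 / 2) 0 μ := by
    have hq : (0 : ℂ) + 1 / 2 + 1 / 2 = 0 + 1 := by norm_num
    rw [theta_sub_I, hq, theta_q_add_one, ← mul_assoc, ← Complex.exp_add]
    congr 2
    ring
  have hθ₃ : theta 0 0 (μ - I) = theta 0 (1 / 2) μ := by
    simp [theta_sub_I]
  have hθ₄ : theta 0 (1 / 2) (μ - I) = theta 0 0 μ := by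
    have hq : (1 / 2 : ℂ) + 0 + 1 / 2 = 0 + 1 := by norm_num
    rw [theta_sub_I, hq, theta_q_add_one]
    simp
  rw [thetaConstProd, thetaConstProd, hθ₂, hθ₃, hθ₄]
  ring

lemma thetaQProd_sub_I (p q μ : ℂ) :
    thetaQProd p q (μ - I) =
      -I * cexp (-π * I * (p * (p + 1))) ^ 3 * thetaQProd p (q + p + 1 / 2) μ := by
  have hq₁ : q + 1 / 2 + p + 1 / 2 = q + p + 1 / 2 + 1 / 2 := by ring
  have hq₂ : q + 1 / 2 + (p + 1 / 2) + 1 / 2 = q + p + 1 / 2 + 1 := by ring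
  have hq₃ : q + (p + 1 / 2) + 1 / 2 = q + p + 1 / 2 + 1 / 2 := by ring
  have hexp : cexp (-π * I * (p * (p + 1))) *
      (cexp (-π * I * ((p + 1 / 2) * (p + 1 / 2 + 1))) * cexp (2 * π * I * (p + 1 / 2))) *
      cexp (-π * I * ((p + 1 / 2) * (p + 1 / 2 + 1))) =
      -I * cexp (-π * I * (p * (p + 1))) ^ 3 := by
    rw [← Complex.exp_neg_pi_div_two_mul_I, ← Complex.exp_nat_mul]
    simp only [← Complex.exp_add]
    congr 1
    push_cast
    ring
  simp only [thetaQProd, thetaQ_sub_I]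
  rw [hq₁, hq₂, hq₃, thetaQ_q_add_one, ← hexp]
  ring

lemma a0two_sub_I (Λ p q μ : ℂ) :
    a0two Λ p q (μ - I) = a0two Λ p (q + p + 1 / 2) μ := by
  simp only [a0two_eq_thetaConstProd_sq_mul_thetaQProd, thetaConstProd_sub_I, thetaQProd_sub_I,
    theta_sub_I, thetaQ_sub_I, mul_pow, exp_pi_div_four_mul_I_sq]
  field_simp
  rw [I_sq]
  ring

lemma thetaConstProd_one_div {μ : ℂ} (hμ : μ ≠ 0) :
    thetaConstProd (1 / μ) = (μ ^ (1 / 2 : ℂ)) ^ 3 * thetaConstProd μ := by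
  have hp : theta (-(1 / 2)) 0 μ = theta (1 / 2) 0 μ := by
    rw [← theta_p_add_one]
    norm_num
  simp only [thetaConstProd, theta_one_div hμ, hp, neg_zero, mul_zero, zero_mul,
    Complex.exp_zero, mul_one]
  ring

lemma thetaQProd_one_div {μ : ℂ} (hμ : 0 < μ.re) (p q : ℂ) :
    thetaQProd p q (1 / μ) = -(μ * μ ^ (1 / 2 : ℂ) * cexp (2 * π * I * p * q)) ^ 3 *
      cexp (2 * π * I * (p + q)) * thetaQProd (-q) p μ := by
  have hp (r : ℂ) : thetaQ (-(q + 1 / 2)) r μ = thetaQ (-q + 1 / 2) r μ := by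
    rw [← thetaQ_p_add_one]
    congr 1
    ring
  have hexp : cexp (2 * π * I * p * (q + 1 / 2)) * cexp (2 * π * I * (p + 1 / 2) * (q + 1 / 2)) *
      cexp (2 * π * I * (p + 1 / 2) * q) =
      cexp (π / 2 * I) * cexp (2 * π * I * p * q) ^ 3 * cexp (2 * π * I * (p + q)) := by
    rw [← Complex.exp_nat_mul]
    simp only [← Complex.exp_add]
    congr 1
    push_cast
    ring
  rw [Complex.exp_pi_div_two_mul_I] at hexp
  simp only [thetaQProd, thetaQ_one_div hμ, hp]
  linear_combination ((-I * μ * μ ^ (1 / 2 : ℂ)) ^ 3 * thetaQ (-q) (p + 1 / 2) μ *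
      thetaQ (-q + 1 / 2) (p + 1 / 2) μ * thetaQ (-q + 1 / 2) p μ) * hexp -
    ((μ * μ ^ (1 / 2 : ℂ) * cexp (2 * π * I * p * q)) ^ 3 * cexp (2 * π * I * (p + q)) *
      (thetaQ (-q) (p + 1 / 2) μ * thetaQ (-q + 1 / 2) (p + 1 / 2) μ *
        thetaQ (-q + 1 / 2) p μ)) * I_pow_four

lemma a0two_one_div {μ : ℂ} (hμ : 0 < μ.re) (Λ p q : ℂ) :
    a0two Λ p q (1 / μ) = -μ ^ 2 * a0two Λ (-q) p μ := by
  have hμ₀ : μ ≠ 0 := ne_zero_of_re_pos hμ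
  have hpow : (μ ^ (1 / 2 : ℂ)) ^ 6 = μ ^ 3 := by
    rw [pow_mul _ 2 3, one_div, cpow_ofNat_inv_pow]
  have hexp : cexp (2 * π * I * (p + q)) * cexp (-(2 * π * I * p)) =
      cexp (-(2 * π * I * -q)) := by
    rw [← Complex.exp_add]
    congr 1
    ring
  simp only [a0two_eq_thetaConstProd_sq_mul_thetaQProd, thetaConstProd_one_div hμ₀,
    thetaQProd_one_div hμ, theta_one_div hμ₀, thetaQ_one_div hμ, ← hexp]
  field_simp
  rw [hpow, I_pow_four, mul_one, mul_comm (thetaConstProd μ ^ 2)]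

end

/-- Modular transformation properties of the Seeley–de Witt coefficient
`ã₀[p,q] = 4F²w₁w₂w₃` of the two-parametric family under `iμ ↦ iμ+1` and `iμ ↦ i/μ`. -/
theorem statement16 (Λ : ℂ) (hΛ : Λ ≠ 0) (p q μ : ℂ) (hμ : 0 < μ.re) :
    a0two Λ p q (μ - Complex.I) = a0two Λ p (q + p + 1 / 2) μ ∧
    (theta (-q) p μ ≠ 0 → thetaQ (-q) p μ ≠ 0 →
      a0two Λ p q (1 / μ) = -μ ^ 2 * a0two Λ (-q) p μ) :=
  ⟨a0two_sub_I Λ p q μ, fun _ _ => a0two_one_div hμ Λ p q⟩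

end
end

section
/- Let p, q ∈ ℂ and μ ∈ ℂ with Re μ > 0. Then: (i) w₁[p,q+1](iμ) = w₁[p,q](iμ), w₂[p,q+1](iμ) = −w₂[p,q](iμ), w₃[p,q+1](iμ) = −w₃[p,q](iμ), and F[p,q+1](iμ) = F[p,q](iμ); (ii) w₁[p+1,q](iμ) = −w₁[p,q](iμ), w₂[p+1,q](iμ) = −w₂[p,q](iμ), w₃[p+1,q](iμ) = w₃[p,q](iμ), and F[p+1,q](iμ) = F[p,q](iμ); consequently the coefficient ã₀[p,q](iμ) = 4F[p,q](iμ)²w₁[p,q](iμ)w₂[p,q](iμ)w₃[p,q](iμ) is periodic of period 1 in both parameters: ã₀[p,q+1](iμ) = ã₀[p+1,q](iμ) = ã₀[p,q](iμ). -/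
noncomputable section

/-!
A unit shift of `p` only reindexes the theta series. A unit shift of `q` multiplies the term of
index `m` by `e^{2πi(m+p)} = e^{2πip}`, which does not depend on `m`. Hence a quotient of two
series with characteristics `p'` and `p` picks up `e^{2πi(p'-p)}`, which is `1` for `p' = p` and
`-1` for `p' = p + 1/2`. The signs under a unit shift of `p` come from the prefactor `e^{πip}` in
`w₁` and `w₂`.
-/

open Function

/-- The theta series with characteristics `[p,q]` at `iμ` whose term of index `m` carries the
weight `c (m + p)`. It treats `theta` (weight `1`) and `thetaQ` (weight `id`, up to the factor
`2πi`) simultaneously. -/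
def weightedTheta (c : ℂ → ℂ) (p q μ : ℂ) : ℂ :=
  ∑' m : ℤ, c (m + p) * Complex.exp (-(Real.pi : ℂ) * ((m : ℂ) + p) ^ 2 * μ +
    2 * (Real.pi : ℂ) * Complex.I * ((m : ℂ) + p) * q)

lemma theta_eq_weightedTheta (p q μ : ℂ) : theta p q μ = weightedTheta (fun _ => 1) p q μ := by
  simp only [theta, weightedTheta, one_mul]

lemma thetaQ_eq_weightedTheta (p q μ : ℂ) :
    thetaQ p q μ = 2 * Real.pi * Complex.I * weightedTheta id p q μ :=
  rfl

lemma weightedTheta_periodic_left (c : ℂ → ℂ) (q μ : ℂ) :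
    Periodic (fun p => weightedTheta c p q μ) 1 := by
  intro p
  have cast_shift (m : ℤ) : (m : ℂ) + (p + 1) = ((m + 1 : ℤ) : ℂ) + p := by
    push_cast
    ring
  simp only [weightedTheta, cast_shift]
  exact (Equiv.addRight (1 : ℤ)).tsum_eq fun m : ℤ => c (m + p) *
    Complex.exp (-(Real.pi : ℂ) * (m + p) ^ 2 * μ + 2 * Real.pi * Complex.I * (m + p) * q)

lemma weightedTheta_add_one_right (c : ℂ → ℂ) (p q μ : ℂ) :
    weightedTheta c p (q + 1) μ =
      Complex.exp (2 * Real.pi * Complex.I * p) * weightedTheta c p q μ := by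
  have exp_shift (m : ℤ) :
      Complex.exp (2 * Real.pi * Complex.I * (m + p)) =
        Complex.exp (2 * Real.pi * Complex.I * p) := by
    rw [← Complex.exp_periodic.int_mul m (2 * Real.pi * Complex.I * p)]
    ring_nf
  rw [weightedTheta, weightedTheta, ← tsum_mul_left]
  refine tsum_congr fun m => ?_
  rw [mul_add_one, ← add_assoc, Complex.exp_add, exp_shift]
  ring

lemma theta_periodic_left (q μ : ℂ) : Periodic (fun p => theta p q μ) 1 := by
  simpa only [theta_eq_weightedTheta] using weightedTheta_periodic_left (fun _ => 1) q μ

lemma thetaQ_periodic_left (q μ : ℂ) : Periodic (fun p => thetaQ p q μ) 1 :=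
  fun p => congrArg (2 * Real.pi * Complex.I * ·) (weightedTheta_periodic_left id q μ p)

lemma theta_add_one_right (p q μ : ℂ) :
    theta p (q + 1) μ = Complex.exp (2 * Real.pi * Complex.I * p) * theta p q μ := by
  simp only [theta_eq_weightedTheta, weightedTheta_add_one_right]

lemma thetaQ_add_one_right (p q μ : ℂ) :
    thetaQ p (q + 1) μ = Complex.exp (2 * Real.pi * Complex.I * p) * thetaQ p q μ := by
  rw [thetaQ_eq_weightedTheta, thetaQ_eq_weightedTheta, weightedTheta_add_one_right,
    mul_left_comm]

lemma thetaQ_div_theta_add_one_right (p p' q q' μ : ℂ) :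
    thetaQ p' (q' + 1) μ / theta p (q + 1) μ =
      Complex.exp (2 * Real.pi * Complex.I * (p' - p)) * (thetaQ p' q' μ / theta p q μ) := by
  rw [thetaQ_add_one_right, theta_add_one_right, mul_div_mul_comm, ← Complex.exp_sub, ← mul_sub]

lemma thetaQ_div_theta_add_one_right_same (p q q' μ : ℂ) :
    thetaQ p (q' + 1) μ / theta p (q + 1) μ = thetaQ p q' μ / theta p q μ := by
  rw [thetaQ_div_theta_add_one_right, sub_self, mul_zero, Complex.exp_zero, one_mul]

lemma thetaQ_div_theta_add_one_right_half (p q q' μ : ℂ) :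
    thetaQ (p + 1 / 2) (q' + 1) μ / theta p (q + 1) μ =
      -(thetaQ (p + 1 / 2) q' μ / theta p q μ) := by
  have half_period : 2 * Real.pi * Complex.I * (p + 1 / 2 - p) = Real.pi * Complex.I := by ring
  rw [thetaQ_div_theta_add_one_right, half_period, Complex.exp_pi_mul_I, neg_one_mul]

lemma exp_pi_mul_I_mul_antiperiodic :
    Antiperiodic (fun p : ℂ => Complex.exp (Real.pi * Complex.I * p)) 1 := by
  intro p
  simp only [mul_add_one]
  exact Complex.exp_antiperiodic _

lemma w1_periodic_right (p μ : ℂ) : Periodic (fun q => w1 p q μ) 1 := by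
  intro q
  simp only [w1, mul_div_mul_comm, add_right_comm q 1, thetaQ_div_theta_add_one_right_same]

lemma w2_antiperiodic_right (p μ : ℂ) : Antiperiodic (fun q => w2 p q μ) 1 := by
  intro q
  simp only [w2, mul_div_mul_comm, add_right_comm q 1, thetaQ_div_theta_add_one_right_half,
    mul_neg]

lemma w3_antiperiodic_right (p μ : ℂ) : Antiperiodic (fun q => w3 p q μ) 1 := by
  intro q
  simp only [w3, mul_div_assoc, thetaQ_div_theta_add_one_right_half, mul_neg]

lemma Ftwo_periodic_right (Λ p μ : ℂ) : Periodic (fun q => Ftwo Λ p q μ) 1 := by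
  intro q
  simp only [Ftwo, ← inv_div (thetaQ _ _ _), thetaQ_div_theta_add_one_right_same]

lemma w1_antiperiodic_left (q μ : ℂ) : Antiperiodic (fun p => w1 p q μ) 1 := by
  intro p
  simp only [w1, thetaQ_periodic_left _ _ p, theta_periodic_left _ _ p,
    exp_pi_mul_I_mul_antiperiodic p, neg_mul _ (theta p q μ), div_neg]

lemma w2_antiperiodic_left (q μ : ℂ) : Antiperiodic (fun p => w2 p q μ) 1 := by
  intro p
  simp only [w2, add_right_comm p 1, thetaQ_periodic_left _ _ (p + 1 / 2),
    theta_periodic_left _ _ p, exp_pi_mul_I_mul_antiperiodic p, neg_mul, div_neg]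

lemma w3_periodic_left (q μ : ℂ) : Periodic (fun p => w3 p q μ) 1 := by
  intro p
  simp only [w3, add_right_comm p 1, thetaQ_periodic_left _ _ (p + 1 / 2),
    theta_periodic_left _ _ p]

lemma Ftwo_periodic_left (Λ q μ : ℂ) : Periodic (fun p => Ftwo Λ p q μ) 1 := by
  intro p
  simp only [Ftwo, thetaQ_periodic_left _ _ p, theta_periodic_left _ _ p]

lemma a0two_periodic_right (Λ p μ : ℂ) : Periodic (fun q => a0two Λ p q μ) 1 := by
  intro q
  simp only [a0two, Ftwo_periodic_right _ _ _ q, w1_periodic_right _ _ q,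
    w2_antiperiodic_right _ _ q, w3_antiperiodic_right _ _ q, mul_neg, neg_mul, neg_neg]

lemma a0two_periodic_left (Λ q μ : ℂ) : Periodic (fun p => a0two Λ p q μ) 1 := by
  intro p
  simp only [a0two, Ftwo_periodic_left _ _ _ p, w1_antiperiodic_left _ _ p,
    w2_antiperiodic_left _ _ p, w3_periodic_left _ _ p, mul_neg, neg_mul, neg_neg]

/-- Lemma 8.1 (case n = 0): periodicity of `w₁, w₂, w₃, F` of the two-parametric
family in the characteristics `p` and `q`, and the resulting periodicity of
`ã₀[p,q] = 4F²w₁w₂w₃` of period 1 in both parameters. -/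
theorem statement19 (Λ : ℂ) (hΛ : Λ ≠ 0) (p q μ : ℂ) (hμ : 0 < μ.re) :
    (w1 p (q + 1) μ = w1 p q μ ∧
     w2 p (q + 1) μ = -w2 p q μ ∧
     w3 p (q + 1) μ = -w3 p q μ ∧
     Ftwo Λ p (q + 1) μ = Ftwo Λ p q μ) ∧
    (w1 (p + 1) q μ = -w1 p q μ ∧
     w2 (p + 1) q μ = -w2 p q μ ∧
     w3 (p + 1) q μ = w3 p q μ ∧
     Ftwo Λ (p + 1) q μ = Ftwo Λ p q μ) ∧
    (a0two Λ p (q + 1) μ = a0two Λ p q μ ∧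
     a0two Λ (p + 1) q μ = a0two Λ p q μ) :=
  ⟨⟨w1_periodic_right p μ q, w2_antiperiodic_right p μ q, w3_antiperiodic_right p μ q,
    Ftwo_periodic_right Λ p μ q⟩,
   ⟨w1_antiperiodic_left q μ p, w2_antiperiodic_left q μ p, w3_periodic_left q μ p,
    Ftwo_periodic_left Λ q μ p⟩,
   a0two_periodic_right Λ p μ q, a0two_periodic_left Λ q μ p⟩

end
end
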